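/- arXiv:2312.07610 — 2 statements merged into one kernel-verified Lean document; each statement's English description precedes it below -/
import Mathlib

section
/- Identification of the W-conditional randomized interventional analogue mean under model M1: under consistency, positivity, A1.1' and A1.2, all conditioning events in the definition of E[Y^{a,G_{a*|W}}] have positive probability, and for all a, a* ∈ {0,1} one has E[Y^{a,G_{a*|W}}] = Ψ_RDE-W(P; a, a*). -/
open Classical

noncomputable section

/-- Probability of the event `S` under the probability mass function `P`
on a finite sample space. -/
def pr {Ω : Type} [Fintype Ω] (P : Ω → ℝ) (S : Ω → Prop) : ℝ :=
  ∑ ω, if S ω then P ω else 0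

/-- Conditional probability of `S` given `T`, with the convention that it is `0`
when the conditioning event is null (in Lean, `x / 0 = 0`). -/
def cpr {Ω : Type} [Fintype Ω] (P : Ω → ℝ) (S T : Ω → Prop) : ℝ :=
  pr P (fun ω => S ω ∧ T ω) / pr P T

/-- Expectation of `X` under `P`. -/
def expec {Ω : Type} [Fintype Ω] (P : Ω → ℝ) (X : Ω → ℝ) : ℝ :=
  ∑ ω, X ω * P ω

/-- Conditional expectation of `X` given the event `T`, with the convention that
it is `0` when the conditioning event is null. -/
def cexp {Ω : Type} [Fintype Ω] (P : Ω → ℝ) (X : Ω → ℝ) (T : Ω → Prop) : ℝ :=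
  (∑ ω, if T ω then X ω * P ω else 0) / pr P T

/-- The functional `Ψ_RDE-W(P; a, a*)
  = Σ_m Σ_w E[Y | M=m, W=w, A=a] · P(M=m | W=w, A=a*) · P(W=w | A=a)`. -/
def psiRDEW {Ω Wt Mt : Type} [Fintype Ω] [Fintype Wt] [Fintype Mt]
    (P : Ω → ℝ) (A : Ω → Fin 2) (W : Ω → Wt) (M : Ω → Mt) (Y : Ω → ℝ)
    (a astar : Fin 2) : ℝ :=
  ∑ m, ∑ w,
    cexp P Y (fun ω => M ω = m ∧ W ω = w ∧ A ω = a)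
      * cpr P (fun ω => M ω = m) (fun ω => W ω = w ∧ A ω = astar)
      * cpr P (fun ω => W ω = w) (fun ω => A ω = a)

/-- `E[Y^{a,G_{a*|W}}] = Σ_w P(W^a=w) Σ_m P(M^{a*}=m | W^{a*}=w) · E[Y^{a,m} | W^a=w]`. -/
def gMeanW {Ω Wt Mt : Type} [Fintype Ω] [Fintype Wt] [Fintype Mt]
    (P : Ω → ℝ) (Wc : Fin 2 → Ω → Wt) (Mc : Fin 2 → Ω → Mt)
    (Yc : Fin 2 → Mt → Ω → ℝ) (a astar : Fin 2) : ℝ :=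
  ∑ w, pr P (fun ω => Wc a ω = w) *
    (∑ m, cpr P (fun ω => Mc astar ω = m) (fun ω => Wc astar ω = w)
      * cexp P (Yc a m) (fun ω => Wc a ω = w))

/-!
Within the arm `A = a`, consistency replaces observed by counterfactual variables, and A1.1' then
removes the conditioning on `A = a`. For the outcome regression, A1.2 first removes the
conditioning on the mediator:
`E[Y | M=m, W=w, A=a] = E[Y^{a,m} | M^a=m, W=w, A=a] = E[Y^{a,m} | W=w, A=a] = E[Y^{a,m} | W^a=w]`.
Both independence assumptions concern atoms only; they pass to expectations by summing over the
finitely many values of the variable.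
-/

/-- The partial expectation `E[X; T]`, the numerator of `E[X | T]`. -/
def partialExpec {Ω : Type} [Fintype Ω] (P : Ω → ℝ) (X : Ω → ℝ) (T : Ω → Prop) : ℝ :=
  ∑ ω, if T ω then X ω * P ω else 0

/-- Independence of the random element `V` and the event `T`. It is stated on the atoms of `V`,
which on a finite sample space determine the law of `V`. -/
def IndepOfEvent {Ω β : Type} [Fintype Ω] (P : Ω → ℝ) (V : Ω → β) (T : Ω → Prop) : Prop :=
  ∀ v, pr P (fun ω => V ω = v ∧ T ω) = pr P (fun ω => V ω = v) * pr P T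

/-- Conditional independence of the random element `V` and the event `S` given the event `T`,
stated on the atoms of `V`. It holds trivially when `T` is null, by the convention for `cpr`. -/
def CondIndepOfEvent {Ω β : Type} [Fintype Ω] (P : Ω → ℝ) (V : Ω → β) (S T : Ω → Prop) : Prop :=
  ∀ v, cpr P (fun ω => V ω = v ∧ S ω) T = cpr P (fun ω => V ω = v) T * cpr P S T

section FiniteProbability

variable {Ω β : Type} [Fintype Ω] {P : Ω → ℝ}

theorem pr_congr {S T : Ω → Prop} (h : ∀ ω, S ω ↔ T ω) : pr P S = pr P T := by
  rw [funext fun ω => propext (h ω)]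

theorem cpr_congr {S S' T T' : Ω → Prop} (hT : ∀ ω, T ω ↔ T' ω)
    (hS : ∀ ω, T' ω → (S ω ↔ S' ω)) : cpr P S T = cpr P S' T' := by
  have hST : ∀ ω, S ω ∧ T ω ↔ S' ω ∧ T' ω := fun ω => by
    rw [hT, and_congr_left (hS ω)]
  rw [cpr, cpr, pr_congr hT, pr_congr hST]

theorem cexp_congr {X X' : Ω → ℝ} {T T' : Ω → Prop} (hT : ∀ ω, T ω ↔ T' ω)
    (hX : ∀ ω, T' ω → X ω = X' ω) : cexp P X T = cexp P X' T' := by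
  obtain rfl : T = T' := funext fun ω => propext (hT ω)
  refine congrArg (· / pr P T) (Finset.sum_congr rfl fun ω _ => ?_)
  split_ifs with hω
  · rw [hX ω hω]
  · rfl

theorem pr_eq_partialExpec_one (T : Ω → Prop) : pr P T = partialExpec P (fun _ => 1) T := by
  simp only [pr, partialExpec, one_mul]

theorem cexp_eq_partialExpec_div (X : Ω → ℝ) (T : Ω → Prop) :
    cexp P X T = partialExpec P X T / pr P T :=
  rfl

theorem pr_and_pos_of_cpr_pos {S T : Ω → Prop} (hT : 0 < pr P T) (hST : 0 < cpr P S T) :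
    0 < pr P (fun ω => S ω ∧ T ω) :=
  (div_pos_iff_of_pos_right hT).1 hST

theorem partialExpec_comp (V : Ω → β) (f : β → ℝ) (T : Ω → Prop) :
    partialExpec P (fun ω => f (V ω)) T
      = ∑ v ∈ Finset.univ.image V, f v * pr P (fun ω => V ω = v ∧ T ω) := by
  rw [partialExpec, ← Finset.sum_fiberwise_of_maps_to
    (fun ω _ => Finset.mem_image_of_mem V (Finset.mem_univ ω))]
  refine Finset.sum_congr rfl fun v _ => ?_
  rw [pr, Finset.mul_sum, Finset.sum_filter]
  refine Finset.sum_congr rfl fun ω _ => ?_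
  by_cases hv : V ω = v <;> simp [hv]

theorem partialExpec_comp_eq_mul {V : Ω → β} {S T : Ω → Prop} {c : ℝ}
    (h : ∀ v, pr P (fun ω => V ω = v ∧ S ω) = pr P (fun ω => V ω = v ∧ T ω) * c) (f : β → ℝ) :
    partialExpec P (fun ω => f (V ω)) S = partialExpec P (fun ω => f (V ω)) T * c := by
  simp only [partialExpec_comp, h, Finset.sum_mul, mul_assoc]

namespace IndepOfEvent

variable {V : Ω → β} {T : Ω → Prop}

theorem partialExpec_and (h : IndepOfEvent P V T) (f : β → ℝ) (p : β → Prop) :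
    partialExpec P (fun ω => f (V ω)) (fun ω => p (V ω) ∧ T ω)
      = partialExpec P (fun ω => f (V ω)) (fun ω => p (V ω)) * pr P T := by
  refine partialExpec_comp_eq_mul (fun v => ?_) f
  by_cases hv : p v
  · have hp (ω : Ω) (hω : V ω = v) : p (V ω) := hω ▸ hv
    calc pr P (fun ω => V ω = v ∧ p (V ω) ∧ T ω)
        = pr P (fun ω => V ω = v ∧ T ω) := pr_congr fun ω => by grind
      _ = pr P (fun ω => V ω = v) * pr P T := h v
      _ = pr P (fun ω => V ω = v ∧ p (V ω)) * pr P T := by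
        rw [pr_congr fun ω => (and_iff_left_of_imp (hp ω)).symm]
  · have hp (ω : Ω) : ¬(V ω = v ∧ p (V ω)) := fun hω => hv (hω.1 ▸ hω.2)
    simp only [pr, ← and_assoc, hp, false_and, if_false, Finset.sum_const_zero, zero_mul]

theorem pr_and (h : IndepOfEvent P V T) (p : β → Prop) :
    pr P (fun ω => p (V ω) ∧ T ω) = pr P (fun ω => p (V ω)) * pr P T := by
  simpa only [pr_eq_partialExpec_one] using h.partialExpec_and (fun _ => 1) p

theorem comp {γ : Type} (h : IndepOfEvent P V T) (g : β → γ) :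
    IndepOfEvent P (fun ω => g (V ω)) T :=
  fun u => h.pr_and (g · = u)

theorem cpr_eq_pr (h : IndepOfEvent P V T) (hT : pr P T ≠ 0) (p : β → Prop) :
    cpr P (fun ω => p (V ω)) T = pr P (fun ω => p (V ω)) := by
  rw [cpr, h.pr_and, mul_div_cancel_right₀ _ hT]

theorem cpr_and (h : IndepOfEvent P V T) (hT : pr P T ≠ 0) (p q : β → Prop) :
    cpr P (fun ω => p (V ω)) (fun ω => q (V ω) ∧ T ω)
      = cpr P (fun ω => p (V ω)) (fun ω => q (V ω)) := by
  have hpq : pr P (fun ω => p (V ω) ∧ q (V ω) ∧ T ω)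
      = pr P (fun ω => p (V ω) ∧ q (V ω)) * pr P T := by
    simpa only [and_assoc] using h.pr_and fun v => p v ∧ q v
  rw [cpr, cpr, hpq, h.pr_and, mul_div_mul_right _ _ hT]

theorem cexp_and (h : IndepOfEvent P V T) (hT : pr P T ≠ 0) (f : β → ℝ) (p : β → Prop) :
    cexp P (fun ω => f (V ω)) (fun ω => p (V ω) ∧ T ω)
      = cexp P (fun ω => f (V ω)) (fun ω => p (V ω)) := by
  rw [cexp_eq_partialExpec_div, cexp_eq_partialExpec_div, h.partialExpec_and, h.pr_and,
    mul_div_mul_right _ _ hT]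

end IndepOfEvent

theorem CondIndepOfEvent.cexp_and {V : Ω → β} {S T : Ω → Prop} (h : CondIndepOfEvent P V S T)
    (hT : pr P T ≠ 0) (hST : pr P (fun ω => S ω ∧ T ω) ≠ 0) (f : β → ℝ) :
    cexp P (fun ω => f (V ω)) (fun ω => S ω ∧ T ω) = cexp P (fun ω => f (V ω)) T := by
  have hatom (v : β) : pr P (fun ω => V ω = v ∧ S ω ∧ T ω)
      = pr P (fun ω => V ω = v ∧ T ω) * cpr P S T := by
    have hv := h v
    rw [cpr, cpr, div_mul_eq_mul_div, div_left_inj' hT] at hv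
    simpa only [and_assoc] using hv
  rw [cexp_eq_partialExpec_div, cexp_eq_partialExpec_div, partialExpec_comp_eq_mul hatom, cpr]
  field_simp

end FiniteProbability

section TreatmentArm

variable {Ω Wt Mt : Type} [Fintype Ω] {P : Ω → ℝ} {T : Ω → Prop}
  {W Wa : Ω → Wt} {M Ma : Ω → Mt} {Y Ya : Ω → ℝ}

theorem cpr_covariate_eq_pr_counterfactual (hT : pr P T ≠ 0) (hW : ∀ ω, T ω → Wa ω = W ω)
    (hindep : IndepOfEvent P Wa T) (w : Wt) :
    cpr P (fun ω => W ω = w) T = pr P (fun ω => Wa ω = w) := by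
  rw [← hindep.cpr_eq_pr hT (· = w)]
  exact cpr_congr (fun _ => Iff.rfl) fun ω hω => by rw [hW ω hω]

theorem cpr_mediator_eq_cpr_counterfactual (hT : pr P T ≠ 0) (hW : ∀ ω, T ω → Wa ω = W ω)
    (hM : ∀ ω, T ω → Ma ω = M ω) (hindep : IndepOfEvent P (fun ω => (Wa ω, Ma ω)) T)
    (w : Wt) (m : Mt) :
    cpr P (fun ω => M ω = m) (fun ω => W ω = w ∧ T ω)
      = cpr P (fun ω => Ma ω = m) (fun ω => Wa ω = w) := by
  rw [← hindep.cpr_and hT (fun v => v.2 = m) (fun v => v.1 = w)]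
  exact cpr_congr (fun ω => and_congr_left fun hω => by rw [hW ω hω])
    fun ω hω => by rw [hM ω hω.2]

theorem cexp_outcome_eq_cexp_counterfactual (hT : pr P T ≠ 0) (hW : ∀ ω, T ω → Wa ω = W ω)
    (hM : ∀ ω, T ω → Ma ω = M ω) {m : Mt} (hY : ∀ ω, T ω → M ω = m → Ya ω = Y ω)
    (hindep : IndepOfEvent P (fun ω => (Wa ω, Ya ω)) T) {w : Wt}
    (hWT : pr P (fun ω => W ω = w ∧ T ω) ≠ 0)
    (hMWT : pr P (fun ω => M ω = m ∧ W ω = w ∧ T ω) ≠ 0)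
    (hcond : CondIndepOfEvent P Ya (fun ω => Ma ω = m) (fun ω => W ω = w ∧ T ω)) :
    cexp P Y (fun ω => M ω = m ∧ W ω = w ∧ T ω) = cexp P Ya (fun ω => Wa ω = w) := by
  have hMa (ω : Ω) : M ω = m ∧ W ω = w ∧ T ω ↔ Ma ω = m ∧ W ω = w ∧ T ω :=
    and_congr_left fun hω => by rw [hM ω hω.2]
  have hWa (ω : Ω) : W ω = w ∧ T ω ↔ Wa ω = w ∧ T ω :=
    and_congr_left fun hω => by rw [hW ω hω]
  calc cexp P Y (fun ω => M ω = m ∧ W ω = w ∧ T ω)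
      = cexp P Ya (fun ω => Ma ω = m ∧ W ω = w ∧ T ω) :=
        cexp_congr hMa fun ω hω => (hY ω hω.2.2 ((hMa ω).2 hω).1).symm
    _ = cexp P Ya (fun ω => W ω = w ∧ T ω) :=
        hcond.cexp_and hWT (pr_congr hMa ▸ hMWT) id
    _ = cexp P Ya (fun ω => Wa ω = w ∧ T ω) := cexp_congr hWa fun _ _ => rfl
    _ = cexp P Ya (fun ω => Wa ω = w) := hindep.cexp_and hT Prod.snd (·.1 = w)

end TreatmentArm

theorem rdeW_identification_general {Ω α Wt Mt : Type} [Fintype Ω] [Fintype Wt] [Fintype Mt]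
    {P : Ω → ℝ} {A : Ω → α} {W : Ω → Wt} {M : Ω → Mt} {Y : Ω → ℝ}
    {Wc : α → Ω → Wt} {Mc : α → Ω → Mt} {Yc : α → Mt → Ω → ℝ}
    (hconsW : ∀ a ω, A ω = a → Wc a ω = W ω)
    (hconsM : ∀ a ω, A ω = a → Mc a ω = M ω)
    (hconsY : ∀ a m ω, A ω = a → M ω = m → Yc a m ω = Y ω)
    (hposA : ∀ a, 0 < pr P (fun ω => A ω = a))
    (hposW : ∀ a w, 0 < cpr P (fun ω => W ω = w) (fun ω => A ω = a))
    (hposM : ∀ a w m, 0 < cpr P (fun ω => M ω = m) (fun ω => W ω = w ∧ A ω = a))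
    (hindep : ∀ a, IndepOfEvent P (fun ω => (Wc a ω, Mc a ω, fun m => Yc a m ω))
      (fun ω => A ω = a))
    (hcond : ∀ a m w, CondIndepOfEvent P (Yc a m) (fun ω => Mc a ω = m)
      (fun ω => W ω = w ∧ A ω = a)) :
    (∀ a w, 0 < pr P (fun ω => Wc a ω = w)) ∧
      ∀ a astar,
        ∑ w, pr P (fun ω => Wc a ω = w) *
            ∑ m, cpr P (fun ω => Mc astar ω = m) (fun ω => Wc astar ω = w)
              * cexp P (Yc a m) (fun ω => Wc a ω = w)
          = ∑ m, ∑ w, cexp P Y (fun ω => M ω = m ∧ W ω = w ∧ A ω = a)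
              * cpr P (fun ω => M ω = m) (fun ω => W ω = w ∧ A ω = astar)
              * cpr P (fun ω => W ω = w) (fun ω => A ω = a) := by
  have hcovariate (a : α) (w : Wt) :=
    cpr_covariate_eq_pr_counterfactual (hposA a).ne' (hconsW a) ((hindep a).comp Prod.fst) w
  have hmediator (a : α) (w : Wt) (m : Mt) :=
    cpr_mediator_eq_cpr_counterfactual (hposA a).ne' (hconsW a) (hconsM a)
      ((hindep a).comp fun v => (v.1, v.2.1)) w m
  have hposWA (a : α) (w : Wt) := pr_and_pos_of_cpr_pos (hposA a) (hposW a w)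
  have houtcome (a : α) (w : Wt) (m : Mt) :=
    cexp_outcome_eq_cexp_counterfactual (hposA a).ne' (hconsW a) (hconsM a) (hconsY a m)
      ((hindep a).comp fun v => (v.1, v.2.2 m)) (hposWA a w).ne'
      (pr_and_pos_of_cpr_pos (hposWA a w) (hposM a w m)).ne' (hcond a m w)
  refine ⟨fun a w => hcovariate a w ▸ hposW a w, fun a astar => ?_⟩
  simp only [hcovariate, hmediator, houtcome, Finset.mul_sum]
  rw [Finset.sum_comm]
  exact Finset.sum_congr rfl fun m _ => Finset.sum_congr rfl fun w _ => by ring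

/-- Identification of the `W`-conditional randomized interventional
analogue mean under model `M1`: under consistency, positivity, A1.1' and A1.2, all
conditioning events in the definition of `E[Y^{a,G_{a*|W}}]` have positive
probability, and `E[Y^{a,G_{a*|W}}] = Ψ_RDE-W(P; a, a*)` for all `a, a*`. -/
theorem rdeW_identification
    (Ω Wt Mt : Type) [Fintype Ω] [Fintype Wt] [Fintype Mt]
    (P : Ω → ℝ) (hP0 : ∀ ω, 0 ≤ P ω) (hP1 : (∑ ω, P ω) = 1)
    (A : Ω → Fin 2) (W : Ω → Wt) (M : Ω → Mt) (Y : Ω → ℝ)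
    (Wc : Fin 2 → Ω → Wt) (Mc : Fin 2 → Ω → Mt) (Yc : Fin 2 → Mt → Ω → ℝ)
    -- consistency
    (hconsW : ∀ (a : Fin 2) (ω : Ω), A ω = a → Wc a ω = W ω)
    (hconsM : ∀ (a : Fin 2) (ω : Ω), A ω = a → Mc a ω = M ω)
    (hconsY : ∀ (a : Fin 2) (m : Mt) (ω : Ω), A ω = a → M ω = m → Yc a m ω = Y ω)
    -- positivity
    (hposA : ∀ a : Fin 2, 0 < pr P (fun ω => A ω = a))
    (hposW : ∀ (a : Fin 2) (w : Wt), 0 < cpr P (fun ω => W ω = w) (fun ω => A ω = a))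
    (hposM : ∀ (a : Fin 2) (w : Wt) (m : Mt),
      0 < cpr P (fun ω => M ω = m) (fun ω => W ω = w ∧ A ω = a))
    -- A1.1': for each a, the vector (W^a, M^a, (Y^{a,m})_m) is independent of A
    (hA11 : ∀ (a : Fin 2) (w : Wt) (mv : Mt) (yv : Mt → ℝ) (a' : Fin 2),
      pr P (fun ω => Wc a ω = w ∧ Mc a ω = mv ∧ (∀ m, Yc a m ω = yv m) ∧ A ω = a')
        = pr P (fun ω => Wc a ω = w ∧ Mc a ω = mv ∧ (∀ m, Yc a m ω = yv m))
            * pr P (fun ω => A ω = a'))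
    -- A1.2: Y^{a,m} ⟂ M^a given W on the event {A = a}
    (hA12 : ∀ (a : Fin 2) (m : Mt) (y : ℝ) (mv : Mt) (w : Wt),
      cpr P (fun ω => Yc a m ω = y ∧ Mc a ω = mv) (fun ω => W ω = w ∧ A ω = a)
        = cpr P (fun ω => Yc a m ω = y) (fun ω => W ω = w ∧ A ω = a)
            * cpr P (fun ω => Mc a ω = mv) (fun ω => W ω = w ∧ A ω = a)) :
    (∀ (a : Fin 2) (w : Wt), 0 < pr P (fun ω => Wc a ω = w))
    ∧ (∀ a astar : Fin 2,
        gMeanW P Wc Mc Yc a astar = psiRDEW P A W M Y a astar) := by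
  have hindep (a : Fin 2) : IndepOfEvent P (fun ω => (Wc a ω, Mc a ω, fun m => Yc a m ω))
      (fun ω => A ω = a) := fun ⟨w, mv, yv⟩ => by
    simpa only [Prod.mk.injEq, funext_iff, and_assoc] using hA11 a w mv yv a
  exact rdeW_identification_general hconsW hconsM hconsY hposA hposW hposM hindep
    fun a m w y => hA12 a m y m w
end
end

section
/- Inverse-probability-weighting representation of the g-formula: for any intervention-kernel collection q̃ satisfying positivity B1.2, one has Ψ_{q̃}(P) = E[ Y · ∏_{t=1}^K q̃_t(A_t | L̄_t, Ā_{t-1}) / P(A_t = a_t | L̄_t, Ā_{t-1})|_{a_t = A_t} ], where the weight is evaluated at the realized observed history (which almost surely has all its conditional probabilities positive). -/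
open Classical

noncomputable section

/-- Observed history event `{L̄_t = l̄_t, Ā_{t-1} = ā_{t-1}}` (covariates through
time `t`, treatments strictly before `t`). -/
def histEvent {Ω Lt : Type} {K : ℕ} (L : Fin K → Ω → Lt) (A : Fin K → Ω → Fin 2)
    (t : Fin K) (lbar : Fin K → Lt) (abar : Fin K → Fin 2) : Ω → Prop :=
  fun ω => (∀ s, s ≤ t → L s ω = lbar s) ∧ (∀ s, s < t → A s ω = abar s)

/-- The g-formula `Ψ_q̃(P)` for an intervention-kernel collection `q`:
`Σ_{y,l̄_K,ā_K} y · p(y|l̄_K,ā_K) · ∏_j p(l_j|l̄_{j-1},ā_{j-1}) · ∏_t q̃_t(a_t|l̄_t,ā_{t-1})`. -/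
def gform {Ω Lt : Type} [Fintype Ω] [Fintype Lt] {K : ℕ}
    (P : Ω → ℝ) (L : Fin K → Ω → Lt) (A : Fin K → Ω → Fin 2) (Y : Ω → ℝ)
    (q : Fin K → (Fin K → Lt) → (Fin K → Fin 2) → Fin 2 → ℝ) : ℝ :=
  ∑ lbar : Fin K → Lt, ∑ abar : Fin K → Fin 2,
    cexp P Y (fun ω => (∀ s, L s ω = lbar s) ∧ (∀ s, A s ω = abar s))
      * (∏ j, cpr P (fun ω => L j ω = lbar j)
          (fun ω => (∀ s, s < j → L s ω = lbar s) ∧ (∀ s, s < j → A s ω = abar s)))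
      * (∏ t, q t lbar abar (abar t))

/-- `q` is a collection of intervention kernels: each `q t lbar abar` is a
probability mass function on `{0,1}`. -/
def IsKernel {Lt : Type} {K : ℕ}
    (q : Fin K → (Fin K → Lt) → (Fin K → Fin 2) → Fin 2 → ℝ) : Prop :=
  ∀ (t : Fin K) (lbar : Fin K → Lt) (abar : Fin K → Fin 2),
    (∀ a, 0 ≤ q t lbar abar a) ∧ (∑ a, q t lbar abar a) = 1

/-- The kernel at time `t` depends only on the history values `(l̄_t, ā_{t-1})`. -/
def KernelPrefixDep {Lt : Type} {K : ℕ}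
    (q : Fin K → (Fin K → Lt) → (Fin K → Fin 2) → Fin 2 → ℝ) : Prop :=
  ∀ (t : Fin K) (lbar lbar' : Fin K → Lt) (abar abar' : Fin K → Fin 2),
    (∀ s, s ≤ t → lbar s = lbar' s) → (∀ s, s < t → abar s = abar' s) →
    q t lbar abar = q t lbar' abar'

/-- Positivity condition B1.2. -/
def B12 {Ω Lt : Type} [Fintype Ω] {K : ℕ} (P : Ω → ℝ)
    (L : Fin K → Ω → Lt) (A : Fin K → Ω → Fin 2)
    (q : Fin K → (Fin K → Lt) → (Fin K → Fin 2) → Fin 2 → ℝ) : Prop :=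
  ∀ (t : Fin K) (lbar : Fin K → Lt) (abar : Fin K → Fin 2),
    0 < pr P (histEvent L A t lbar abar) →
    ∀ a : Fin 2, 0 < q t lbar abar a →
      0 < cpr P (fun ω => A t ω = a) (histEvent L A t lbar abar)

/-- Counterfactual covariates and natural treatment values at time `t` depend on the
static regime `ā` only through `(ā_1, ..., ā_{t-1})`. -/
def CfPrefixDep {Ω Lt : Type} {K : ℕ}
    (Lc : (Fin K → Fin 2) → Fin K → Ω → Lt)
    (Ac : (Fin K → Fin 2) → Fin K → Ω → Fin 2) : Prop :=
  ∀ (abar abar' : Fin K → Fin 2) (t : Fin K),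
    (∀ s, s < t → abar s = abar' s) → Lc abar t = Lc abar' t ∧ Ac abar t = Ac abar' t

/-- Consistency of the counterfactual process with the observed data. -/
def CfConsistent {Ω Lt : Type} {K : ℕ}
    (L : Fin K → Ω → Lt) (A : Fin K → Ω → Fin 2) (Y : Ω → ℝ)
    (Lc : (Fin K → Fin 2) → Fin K → Ω → Lt)
    (Ac : (Fin K → Fin 2) → Fin K → Ω → Fin 2)
    (Yc : (Fin K → Fin 2) → Ω → ℝ) : Prop :=
  (∀ (abar : Fin K → Fin 2) (t : Fin K) (ω : Ω),
    (∀ s, s < t → A s ω = abar s) → Lc abar t ω = L t ω ∧ Ac abar t ω = A t ω) ∧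
  (∀ (abar : Fin K → Fin 2) (ω : Ω), (∀ s, A s ω = abar s) → Yc abar ω = Y ω)

/-- Counterfactual history event `{L̄_m(ā) = l̄_m, Ā_{m-1}(ā) = ā_{m-1}}`. -/
def cfHist {Ω Lt : Type} {K : ℕ}
    (Lc : (Fin K → Fin 2) → Fin K → Ω → Lt)
    (Ac : (Fin K → Fin 2) → Fin K → Ω → Fin 2)
    (abar : Fin K → Fin 2) (m : Fin K) (lbar : Fin K → Lt) : Ω → Prop :=
  fun ω => (∀ s, s ≤ m → Lc abar s ω = lbar s) ∧ (∀ s, s < m → Ac abar s ω = abar s)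

/-- Sequential exchangeability condition B1.4: for every `m` and `ā`, the vector
`(L_{m+1}(ā), ..., L_K(ā), Y(ā))` is conditionally independent of the indicator
`1{A_m(ā) = ā_m}` given each positive-probability counterfactual history. -/
def B14 {Ω Lt : Type} [Fintype Ω] {K : ℕ} (P : Ω → ℝ)
    (Lc : (Fin K → Fin 2) → Fin K → Ω → Lt)
    (Ac : (Fin K → Fin 2) → Fin K → Ω → Fin 2)
    (Yc : (Fin K → Fin 2) → Ω → ℝ) : Prop :=
  ∀ (m : Fin K) (abar : Fin K → Fin 2) (lbar : Fin K → Lt),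
    0 < pr P (cfHist Lc Ac abar m lbar) →
    ∀ (lv : Fin K → Lt) (y : ℝ),
      cpr P (fun ω => ((∀ s, m < s → Lc abar s ω = lv s) ∧ Yc abar ω = y)
            ∧ Ac abar m ω = abar m)
          (cfHist Lc Ac abar m lbar)
        = cpr P (fun ω => (∀ s, m < s → Lc abar s ω = lv s) ∧ Yc abar ω = y)
              (cfHist Lc Ac abar m lbar)
          * cpr P (fun ω => Ac abar m ω = abar m) (cfHist Lc Ac abar m lbar)

/-- Sequential exchangeability condition B1.3: as B1.4, but with the future vector
enlarged to `(L_{m+1}(ā), ..., L_K(ā), A_{m+1}(ā), ..., A_K(ā), Y(ā))`. -/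
def B13 {Ω Lt : Type} [Fintype Ω] {K : ℕ} (P : Ω → ℝ)
    (Lc : (Fin K → Fin 2) → Fin K → Ω → Lt)
    (Ac : (Fin K → Fin 2) → Fin K → Ω → Fin 2)
    (Yc : (Fin K → Fin 2) → Ω → ℝ) : Prop :=
  ∀ (m : Fin K) (abar : Fin K → Fin 2) (lbar : Fin K → Lt),
    0 < pr P (cfHist Lc Ac abar m lbar) →
    ∀ (lv : Fin K → Lt) (av : Fin K → Fin 2) (y : ℝ),
      cpr P (fun ω => ((∀ s, m < s → Lc abar s ω = lv s)
              ∧ (∀ s, m < s → Ac abar s ω = av s) ∧ Yc abar ω = y)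
            ∧ Ac abar m ω = abar m)
          (cfHist Lc Ac abar m lbar)
        = cpr P (fun ω => (∀ s, m < s → Lc abar s ω = lv s)
              ∧ (∀ s, m < s → Ac abar s ω = av s) ∧ Yc abar ω = y)
              (cfHist Lc Ac abar m lbar)
          * cpr P (fun ω => Ac abar m ω = abar m) (cfHist Lc Ac abar m lbar)

/-- Mean outcome under the stochastic regime with intervention kernels `q`:
`E[Y^q̃] = Σ_{ā} E[ Y(ā) · ∏_t q̃_t(ā_t | L̄_t(ā), ā_{t-1}) ]`. -/
def stochMean {Ω Lt : Type} [Fintype Ω] {K : ℕ} (P : Ω → ℝ)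
    (Lc : (Fin K → Fin 2) → Fin K → Ω → Lt)
    (Yc : (Fin K → Fin 2) → Ω → ℝ)
    (q : Fin K → (Fin K → Lt) → (Fin K → Fin 2) → Fin 2 → ℝ) : ℝ :=
  ∑ abar : Fin K → Fin 2,
    expec P (fun ω => Yc abar ω * ∏ t, q t (fun s => Lc abar s ω) abar (abar t))

/-- The decision functions of a modified treatment policy depend only on
`(a, l̄_t, ā_{t-1})`. -/
def PolPrefixDep {Lt : Type} {K : ℕ}
    (g : Fin K → Fin 2 → (Fin K → Lt) → (Fin K → Fin 2) → Fin 2) : Prop :=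
  ∀ (t : Fin K) (a : Fin 2) (lbar lbar' : Fin K → Lt) (abar abar' : Fin K → Fin 2),
    (∀ s, s ≤ t → lbar s = lbar' s) → (∀ s, s < t → abar s = abar' s) →
    g t a lbar abar = g t a lbar' abar'

/-- `Ap` is the recursively defined assigned-treatment process `Ā⁺` of the MTP `g`:
`A⁺_t = g_t(A_t(Ā⁺_{t-1}), L̄_t(Ā⁺_{t-1}), Ā⁺_{t-1})`. -/
def IsMTPProcess {Ω Lt : Type} {K : ℕ}
    (Lc : (Fin K → Fin 2) → Fin K → Ω → Lt)
    (Ac : (Fin K → Fin 2) → Fin K → Ω → Fin 2)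
    (g : Fin K → Fin 2 → (Fin K → Lt) → (Fin K → Fin 2) → Fin 2)
    (Ap : Fin K → Ω → Fin 2) : Prop :=
  ∀ (t : Fin K) (ω : Ω),
    Ap t ω = g t (Ac (fun s => Ap s ω) t ω)
        (fun s => Lc (fun s' => Ap s' ω) s ω) (fun s => Ap s ω)

/-- Induced intervention kernels `q̃^g` of an MTP:
`q̃^g_t(a⁺ | l̄_t, ā_{t-1}) = Σ_{a : g_t(a,l̄_t,ā_{t-1}) = a⁺} P(A_t = a | L̄_t = l̄_t, Ā_{t-1} = ā_{t-1})`. -/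
def qMTP {Ω Lt : Type} [Fintype Ω] {K : ℕ} (P : Ω → ℝ)
    (L : Fin K → Ω → Lt) (A : Fin K → Ω → Fin 2)
    (g : Fin K → Fin 2 → (Fin K → Lt) → (Fin K → Fin 2) → Fin 2) :
    Fin K → (Fin K → Lt) → (Fin K → Fin 2) → Fin 2 → ℝ :=
  fun t lbar abar aplus =>
    ∑ a : Fin 2, if g t a lbar abar = aplus then
      cpr P (fun ω => A t ω = a) (histEvent L A t lbar abar) else 0

/-- Counterfactual (g1-stochastic) kernels `q^{g,cf}` of an MTP:
`q^{g,cf}_t(a⁺ | l̄_t, ā⁺_{t-1}) = P( g_t(A_t(Ā⁺_{t-1}), l̄_t, ā⁺_{t-1}) = a⁺ |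
  L̄_t(Ā⁺_{t-1}) = l̄_t, Ā⁺_{t-1} = ā⁺_{t-1} )`. -/
def qMTPcf {Ω Lt : Type} [Fintype Ω] {K : ℕ} (P : Ω → ℝ)
    (Lc : (Fin K → Fin 2) → Fin K → Ω → Lt)
    (Ac : (Fin K → Fin 2) → Fin K → Ω → Fin 2)
    (g : Fin K → Fin 2 → (Fin K → Lt) → (Fin K → Fin 2) → Fin 2)
    (Ap : Fin K → Ω → Fin 2) :
    Fin K → (Fin K → Lt) → (Fin K → Fin 2) → Fin 2 → ℝ :=
  fun t lbar abar aplus =>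
    cpr P (fun ω => g t (Ac (fun s => Ap s ω) t ω) lbar abar = aplus)
      (fun ω => (∀ s, s ≤ t → Lc (fun s' => Ap s' ω) s ω = lbar s) ∧
        (∀ s, s < t → Ap s ω = abar s))

/-!
Along a path `(l̄, ā)` the observed law factors as
`P(l̄, ā) = ∏_j p(l_j | l̄_{j-1}, ā_{j-1}) · ∏_t p(a_t | l̄_t, ā_{t-1})`, so replacing
the propensities `p(a_t | ·)` by the kernels `q̃_t(a_t | ·)` multiplies it by the
inverse-probability weight. Positivity makes this change of measure legitimate: a path all of
whose covariate factors and kernel values are nonzero has, by induction on time, only prefixes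
of positive probability, hence positive propensities. Summing
`E[Y | l̄, ā] · P(l̄, ā) · weight` over all paths gives the expectation.
-/

section FiniteProbability

variable {Ω : Type} [Fintype Ω] {P : Ω → ℝ}

theorem pr_nonneg (hP : ∀ ω, 0 ≤ P ω) (S : Ω → Prop) : 0 ≤ pr P S :=
  Finset.sum_nonneg fun ω _ => ite_nonneg (hP ω) le_rfl

theorem pr_mono (hP : ∀ ω, 0 ≤ P ω) {S T : Ω → Prop} (hST : ∀ ω, S ω → T ω) :
    pr P S ≤ pr P T := by
  refine Finset.sum_le_sum fun ω _ => ?_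
  by_cases hS : S ω
  · rw [if_pos hS, if_pos (hST ω hS)]
  · rw [if_neg hS]
    exact ite_nonneg (hP ω) le_rfl

theorem cpr_nonneg (hP : ∀ ω, 0 ≤ P ω) (S T : Ω → Prop) : 0 ≤ cpr P S T :=
  div_nonneg (pr_nonneg hP _) (pr_nonneg hP _)

theorem cpr_mul_pr (hP : ∀ ω, 0 ≤ P ω) (S T : Ω → Prop) :
    cpr P S T * pr P T = pr P (fun ω => S ω ∧ T ω) := by
  refine div_mul_cancel_of_imp fun hT => le_antisymm ?_ (pr_nonneg hP _)
  exact hT ▸ pr_mono hP fun _ => And.right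

theorem eq_zero_of_pr_eq_zero (hP : ∀ ω, 0 ≤ P ω) {T : Ω → Prop} (hT : pr P T = 0)
    {ω : Ω} (hω : T ω) : P ω = 0 := by
  have hsummand := (Finset.sum_eq_zero_iff_of_nonneg
    fun ω _ => ite_nonneg (hP ω) le_rfl).1 hT ω (Finset.mem_univ ω)
  rwa [if_pos hω] at hsummand

theorem cexp_mul_pr (hP : ∀ ω, 0 ≤ P ω) (X : Ω → ℝ) (T : Ω → Prop) :
    cexp P X T * pr P T = ∑ ω, if T ω then X ω * P ω else 0 := by
  refine div_mul_cancel_of_imp fun hT => Finset.sum_eq_zero fun ω _ => ?_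
  split_ifs with hω
  · rw [eq_zero_of_pr_eq_zero hP hT hω, mul_zero]
  · rfl

end FiniteProbability

theorem eq_prod_mul_zero_of_succ {M : Type*} [CommMonoid M] {n : ℕ} (H : ℕ → M) (c : Fin n → M)
    (hsucc : ∀ t : Fin n, H (t + 1) = c t * H t) : H n = (∏ t, c t) * H 0 := by
  induction n with
  | zero => simp
  | succ n ih =>
    rw [Fin.prod_univ_castSucc, mul_comm (∏ _, _), mul_assoc,
      ← ih (fun t => c t.castSucc) fun t => hsucc t.castSucc]
    exact hsucc (Fin.last n)

section Paths

variable {Ω Lt At : Type*} {K : ℕ}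

/-- The event `{L̄_K = l̄, Ā_K = ā}` that the whole observed path is `(l̄, ā)`. -/
def pathEvent (L : Fin K → Ω → Lt) (A : Fin K → Ω → At) (l : Fin K → Lt) (a : Fin K → At) :
    Ω → Prop :=
  fun ω => (∀ s, L s ω = l s) ∧ (∀ s, A s ω = a s)

/-- The event that the observed covariates and treatments agree with `(l̄, ā)` at the first `n`
times. The bound is a natural number so that it runs from the sure event at `0` to `pathEvent`
at `K`. -/
def prefixEvent (L : Fin K → Ω → Lt) (A : Fin K → Ω → At) (l : Fin K → Lt) (a : Fin K → At)
    (n : ℕ) : Ω → Prop :=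
  fun ω => (∀ s : Fin K, (s : ℕ) < n → L s ω = l s) ∧ (∀ s : Fin K, (s : ℕ) < n → A s ω = a s)

theorem prefixEvent_self (L : Fin K → Ω → Lt) (A : Fin K → Ω → At) (l : Fin K → Lt)
    (a : Fin K → At) : prefixEvent L A l a K = pathEvent L A l a := by
  funext ω
  simp [prefixEvent, pathEvent]

theorem sum_sum_ite_pathEvent_mul [Fintype Ω] [Fintype Lt] [Fintype At] {R : Type*}
    [NonUnitalNonAssocSemiring R] (L : Fin K → Ω → Lt) (A : Fin K → Ω → At) (f : Ω → R)
    (w : (Fin K → Lt) → (Fin K → At) → R) :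
    ∑ l, ∑ a, (∑ ω, if pathEvent L A l a ω then f ω else 0) * w l a
      = ∑ ω, f ω * w (fun s => L s ω) (fun s => A s ω) := by
  have hpath (l : Fin K → Lt) (a : Fin K → At) (ω : Ω) :
      pathEvent L A l a ω ↔ (fun s => L s ω) = l ∧ (fun s => A s ω) = a := by
    simp only [pathEvent, funext_iff]
  simp_rw [Finset.sum_mul]
  rw [Finset.sum_congr rfl fun l _ => Finset.sum_comm, Finset.sum_comm]
  simp [hpath, ite_and]

end Paths

section ChainRule

variable {Ω Lt : Type} {K : ℕ} (P : Ω → ℝ) (L : Fin K → Ω → Lt) (A : Fin K → Ω → Fin 2)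
  (l : Fin K → Lt) (a : Fin K → Fin 2)

theorem covariate_and_prefixEvent_eq_histEvent (t : Fin K) :
    (fun ω => L t ω = l t ∧ prefixEvent L A l a t ω) = histEvent L A t l a := by
  funext ω
  simp only [prefixEvent, histEvent, Fin.val_fin_lt, le_iff_lt_or_eq, or_imp, forall_and,
    forall_eq, eq_iff_iff]
  tauto

theorem treatment_and_histEvent_eq_prefixEvent_succ (t : Fin K) :
    (fun ω => A t ω = a t ∧ histEvent L A t l a ω) = prefixEvent L A l a (t + 1) := by
  funext ω
  simp only [prefixEvent, histEvent, Order.lt_add_one_iff, le_iff_lt_or_eq, Fin.val_fin_lt,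
    Fin.val_inj, or_imp, forall_and, forall_eq, eq_iff_iff]
  tauto

variable [Fintype Ω]

/-- The conditional covariate probability `p(l_t | l̄_{t-1}, ā_{t-1})` of the observed data. -/
def covariateProb (t : Fin K) : ℝ :=
  cpr P (fun ω => L t ω = l t) (prefixEvent L A l a t)

/-- The propensity score `p(a_t | l̄_t, ā_{t-1})` of the observed data. -/
def propensity (t : Fin K) : ℝ :=
  cpr P (fun ω => A t ω = a t) (histEvent L A t l a)

/-- The inverse-probability weight `∏_t q̃_t(a_t | l̄_t, ā_{t-1}) / p(a_t | l̄_t, ā_{t-1})` of the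
path `(l̄, ā)`. -/
def ipwWeight (q : Fin K → (Fin K → Lt) → (Fin K → Fin 2) → Fin 2 → ℝ) : ℝ :=
  ∏ t, q t l a (a t) / propensity P L A l a t

variable {P}

theorem pr_histEvent (hP : ∀ ω, 0 ≤ P ω) (t : Fin K) :
    pr P (histEvent L A t l a) = covariateProb P L A l a t * pr P (prefixEvent L A l a t) := by
  rw [covariateProb, cpr_mul_pr hP, covariate_and_prefixEvent_eq_histEvent]

theorem pr_prefixEvent_succ (hP : ∀ ω, 0 ≤ P ω) (t : Fin K) :
    pr P (prefixEvent L A l a (t + 1)) = propensity P L A l a t * pr P (histEvent L A t l a) := by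
  rw [propensity, cpr_mul_pr hP, treatment_and_histEvent_eq_prefixEvent_succ]

theorem pr_prefixEvent_zero (hP1 : ∑ ω, P ω = 1) : pr P (prefixEvent L A l a 0) = 1 := by
  simpa [pr, prefixEvent] using hP1

theorem pr_pathEvent_eq_prod_mul_prod (hP : ∀ ω, 0 ≤ P ω) (hP1 : ∑ ω, P ω = 1) :
    pr P (pathEvent L A l a)
      = (∏ t, covariateProb P L A l a t) * ∏ t, propensity P L A l a t := by
  have hsucc (t : Fin K) : pr P (prefixEvent L A l a (t + 1))
      = covariateProb P L A l a t * propensity P L A l a t * pr P (prefixEvent L A l a t) := by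
    rw [pr_prefixEvent_succ L A l a hP, pr_histEvent L A l a hP]
    ring
  rw [← prefixEvent_self, eq_prod_mul_zero_of_succ (fun n => pr P (prefixEvent L A l a n)) _ hsucc,
    pr_prefixEvent_zero L A l a hP1, mul_one, Finset.prod_mul_distrib]

end ChainRule

section ChangeOfMeasure

variable {Ω Lt : Type} [Fintype Ω] {K : ℕ} {P : Ω → ℝ} {L : Fin K → Ω → Lt}
  {A : Fin K → Ω → Fin 2} {q : Fin K → (Fin K → Lt) → (Fin K → Fin 2) → Fin 2 → ℝ}
  {l : Fin K → Lt} {a : Fin K → Fin 2}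

theorem propensity_pos_of_pr_prefixEvent_pos (hP : ∀ ω, 0 ≤ P ω) (hB12 : B12 P L A q) {t : Fin K}
    (hprefix : 0 < pr P (prefixEvent L A l a t)) (hcov : covariateProb P L A l a t ≠ 0)
    (hq : 0 < q t l a (a t)) : 0 < propensity P L A l a t := by
  have hcov_pos : 0 < covariateProb P L A l a t := (cpr_nonneg hP _ _).lt_of_ne' hcov
  refine hB12 t l a ?_ (a t) hq
  rw [pr_histEvent L A l a hP]
  exact mul_pos hcov_pos hprefix

theorem pr_prefixEvent_pos (hP : ∀ ω, 0 ≤ P ω) (hP1 : ∑ ω, P ω = 1) (hB12 : B12 P L A q)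
    (hcov : ∀ t, covariateProb P L A l a t ≠ 0) (hq : ∀ t, 0 < q t l a (a t)) {n : ℕ}
    (hn : n ≤ K) : 0 < pr P (prefixEvent L A l a n) := by
  induction n with
  | zero => simp [pr_prefixEvent_zero L A l a hP1]
  | succ n ih =>
    let t : Fin K := ⟨n, hn⟩
    have hprefix : 0 < pr P (prefixEvent L A l a t) := ih (Nat.le_of_succ_le hn)
    have hprop := propensity_pos_of_pr_prefixEvent_pos hP hB12 hprefix (hcov t) (hq t)
    rw [pr_prefixEvent_succ L A l a hP t, pr_histEvent L A l a hP t]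
    exact mul_pos hprop (mul_pos ((cpr_nonneg hP _ _).lt_of_ne' (hcov t)) hprefix)

theorem prod_covariateProb_mul_prod_kernel (hP : ∀ ω, 0 ≤ P ω) (hP1 : ∑ ω, P ω = 1)
    (hB12 : B12 P L A q) (hq : ∀ t, 0 ≤ q t l a (a t)) :
    (∏ t, covariateProb P L A l a t) * ∏ t, q t l a (a t)
      = pr P (pathEvent L A l a) * ipwWeight P L A l a q := by
  rw [pr_pathEvent_eq_prod_mul_prod L A l a hP hP1, ipwWeight, Finset.prod_div_distrib]
  by_cases hnull : (∏ t, covariateProb P L A l a t) * ∏ t, q t l a (a t) = 0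
  · rw [← mul_div_assoc, mul_right_comm, hnull, zero_mul, zero_div]
  · obtain ⟨hcov, hker⟩ := mul_ne_zero_iff.1 hnull
    rw [Finset.prod_ne_zero_iff] at hcov hker
    have hpath := pr_prefixEvent_pos hP hP1 hB12 (fun t => hcov t (Finset.mem_univ t))
      (fun t => (hq t).lt_of_ne' (hker t (Finset.mem_univ t))) le_rfl
    rw [prefixEvent_self, pr_pathEvent_eq_prod_mul_prod L A l a hP hP1] at hpath
    rw [mul_assoc, mul_div_cancel₀ _ (right_ne_zero_of_mul hpath.ne')]

end ChangeOfMeasure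

/-- Inverse-probability-weighting representation of the g-formula:
for any intervention-kernel collection `q̃` satisfying positivity B1.2,
`Ψ_q̃(P) = E[ Y · ∏_t q̃_t(A_t | L̄_t, Ā_{t-1}) / p(A_t | L̄_t, Ā_{t-1}) ]`,
where the weight is evaluated at the realized observed history. -/
theorem gformula_ipw_representation
    (K : ℕ) (hK : 1 ≤ K) (Ω Lt : Type) [Fintype Ω] [Fintype Lt]
    (P : Ω → ℝ) (hP0 : ∀ ω, 0 ≤ P ω) (hP1 : (∑ ω, P ω) = 1)
    (L : Fin K → Ω → Lt) (A : Fin K → Ω → Fin 2) (Y : Ω → ℝ)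
    (q : Fin K → (Fin K → Lt) → (Fin K → Fin 2) → Fin 2 → ℝ)
    (hker : IsKernel q) (hkpre : KernelPrefixDep q)
    (hB12 : B12 P L A q) :
    gform P L A Y q
      = ∑ ω, P ω * Y ω *
          ∏ t, q t (fun s => L s ω) (fun s => A s ω) (A t ω)
              / cpr P (fun ω' => A t ω' = A t ω)
                  (histEvent L A t (fun s => L s ω) (fun s => A s ω)) := by
  calc gform P L A Y q
    _ = ∑ l, ∑ a, cexp P Y (pathEvent L A l a)
          * ((∏ t, covariateProb P L A l a t) * ∏ t, q t l a (a t)) := by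
        simp only [gform, mul_assoc]
        rfl
    _ = ∑ l, ∑ a, (∑ ω, if pathEvent L A l a ω then Y ω * P ω else 0)
          * ipwWeight P L A l a q := by
        refine Finset.sum_congr rfl fun l _ => Finset.sum_congr rfl fun a _ => ?_
        rw [prod_covariateProb_mul_prod_kernel hP0 hP1 hB12 fun t => (hker t l a).1 (a t),
          ← mul_assoc, cexp_mul_pr hP0]
    _ = ∑ ω, Y ω * P ω * ipwWeight P L A (fun s => L s ω) (fun s => A s ω) q :=
        sum_sum_ite_pathEvent_mul L A _ _
    _ = _ := by
        simp only [mul_comm (Y _)]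
        rfl
end
end
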